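/- The 9×9 real transfer matrix T(μ) of the S=2 asymmetric VBS state has characteristic polynomial (X − λ₁(μ))·(X − λ₂(μ))·(X − λ₃(μ))·(X − λ₄(μ))²·(X − λ₅(μ))²·(X − λ₆(μ))²; in particular its eigenvalues are λ₁, λ₂, λ₃ (each simple) and λ₄, λ₅, λ₆ (each of algebraic multiplicity two). This holds for every μ ∈ [0,1]. -/

import Mathlib

open Matrix Kronecker

/-- The matrix `A⁽²⁾` of the S=2 asymmetric VBS state. -/
noncomputable def A2 (μ : ℝ) : Matrix (Fin 3) (Fin 3) ℝ :=
  !![0, 0, 0; 0, 0, 0; -μ, 0, 0]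

/-- The matrix `A⁽¹⁾` of the S=2 asymmetric VBS state (`κ = √(μ(1+μ²))`). -/
noncomputable def A1 (μ : ℝ) : Matrix (Fin 3) (Fin 3) ℝ :=
  (1 / 2 : ℝ) • !![0, 0, 0;
    Real.sqrt (μ * (1 + μ ^ 2)), 0, 0;
    0, -Real.sqrt (μ * (1 + μ ^ 2)), 0]

/-- The matrix `A⁽⁰⁾` of the S=2 asymmetric VBS state. -/
noncomputable def A0 (μ : ℝ) : Matrix (Fin 3) (Fin 3) ℝ :=
  (1 / Real.sqrt 6) • !![-μ, 0, 0; 0, 1 + μ ^ 2, 0; 0, 0, -μ]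

/-- The matrix `A⁽⁻¹⁾` of the S=2 asymmetric VBS state (`κ = √(μ(1+μ²))`). -/
noncomputable def Am1 (μ : ℝ) : Matrix (Fin 3) (Fin 3) ℝ :=
  (1 / 2 : ℝ) • !![0, -Real.sqrt (μ * (1 + μ ^ 2)), 0;
    0, 0, Real.sqrt (μ * (1 + μ ^ 2));
    0, 0, 0]

/-- The matrix `A⁽⁻²⁾` of the S=2 asymmetric VBS state. -/
noncomputable def Am2 (μ : ℝ) : Matrix (Fin 3) (Fin 3) ℝ :=
  !![0, 0, -μ; 0, 0, 0; 0, 0, 0]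

/-- The transfer matrix `T(μ)` of the S=2 asymmetric VBS state. -/
noncomputable def T (μ : ℝ) : Matrix (Fin 3 × Fin 3) (Fin 3 × Fin 3) ℝ :=
  A2 μ ⊗ₖ A2 μ + A1 μ ⊗ₖ A1 μ + A0 μ ⊗ₖ A0 μ + Am1 μ ⊗ₖ Am1 μ + Am2 μ ⊗ₖ Am2 μ

/-- The eigenvalue `λ₁(μ)`. -/
noncomputable def lam1 (μ : ℝ) : ℝ :=
  (1 + 9 * μ ^ 2 + μ ^ 4 +
    Real.sqrt (1 + 8 * μ ^ 2 + 63 * μ ^ 4 + 8 * μ ^ 6 + μ ^ 8)) / 12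

/-- The eigenvalue `λ₂(μ)`. -/
noncomputable def lam2 (μ : ℝ) : ℝ :=
  (1 + 9 * μ ^ 2 + μ ^ 4 -
    Real.sqrt (1 + 8 * μ ^ 2 + 63 * μ ^ 4 + 8 * μ ^ 6 + μ ^ 8)) / 12

/-- The eigenvalue `λ₃(μ)`. -/
noncomputable def lam3 (μ : ℝ) : ℝ := -5 * μ ^ 2 / 6

/-- The eigenvalue `λ₄(μ)`. -/
noncomputable def lam4 (μ : ℝ) : ℝ := μ * (1 + μ ^ 2) / 12

/-- The eigenvalue `λ₅(μ)`. -/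
noncomputable def lam5 (μ : ℝ) : ℝ := -5 * μ * (1 + μ ^ 2) / 12

/-- The eigenvalue `λ₆(μ)`. -/
noncomputable def lam6 (μ : ℝ) : ℝ := μ ^ 2 / 6

/-- Enumeration of the index set by the conserved quantity `i - j`. -/
def idxFun : Fin 3 ⊕ (Fin 2 ⊕ (Fin 2 ⊕ Fin 2)) → Fin 3 × Fin 3
  | .inl i => (i, i)
  | .inr (.inl i) => (i.succ, i.castSucc)
  | .inr (.inr (.inl i)) => (i.castSucc, i.succ)
  | .inr (.inr (.inr i)) => if i = 0 then (0, 2) else (2, 0)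

noncomputable def idxEquiv : Fin 3 ⊕ (Fin 2 ⊕ (Fin 2 ⊕ Fin 2)) ≃ Fin 3 × Fin 3 :=
  Equiv.ofBijective idxFun (by decide)

lemma T_reindex (μ : ℝ) (h0 : 0 ≤ μ) :
    Matrix.reindex idxEquiv.symm idxEquiv.symm (T μ) =
      Matrix.fromBlocks
        !![μ ^ 2 / 6, μ * (1 + μ ^ 2) / 4, μ ^ 2;
           μ * (1 + μ ^ 2) / 4, (1 + μ ^ 2) ^ 2 / 6, μ * (1 + μ ^ 2) / 4;
           μ ^ 2, μ * (1 + μ ^ 2) / 4, μ ^ 2 / 6] 0 0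
        (Matrix.fromBlocks
          !![-(μ * (1 + μ ^ 2)) / 6, -(μ * (1 + μ ^ 2)) / 4;
             -(μ * (1 + μ ^ 2)) / 4, -(μ * (1 + μ ^ 2)) / 6] 0 0
          (Matrix.fromBlocks
            !![-(μ * (1 + μ ^ 2)) / 6, -(μ * (1 + μ ^ 2)) / 4;
               -(μ * (1 + μ ^ 2)) / 4, -(μ * (1 + μ ^ 2)) / 6] 0 0
            !![μ ^ 2 / 6, 0; 0, μ ^ 2 / 6])) := by
  have hk : Real.sqrt (μ * (1 + μ ^ 2)) * Real.sqrt (μ * (1 + μ ^ 2)) = μ * (1 + μ ^ 2) :=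
    Real.mul_self_sqrt (by positivity)
  have h6 : (Real.sqrt 6)⁻¹ * (Real.sqrt 6)⁻¹ = 1 / 6 := by
    rw [← mul_inv, Real.mul_self_sqrt (by norm_num)]; norm_num
  have he : ∀ i, idxEquiv i = idxFun i := fun _ => rfl
  unfold T A2 A1 A0 Am1 Am2
  generalize Real.sqrt (μ * (1 + μ ^ 2)) = k at *
  generalize hs : (Real.sqrt 6)⁻¹ = s at *
  ext i j
  rcases i with i | i | i | i <;> rcases j with j | j | j | j <;>
    fin_cases i <;> fin_cases j <;>
    simp [he, idxFun, hs, Matrix.kroneckerMap_apply] <;> 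
    first
    | done
    | linear_combination (1 / 4) * hk
    | linear_combination (-1 / 4) * hk
    | linear_combination μ ^ 2 * h6
    | linear_combination (1 + μ ^ 2) ^ 2 * h6
    | linear_combination (-(μ * (1 + μ ^ 2))) * h6
    | ring

lemma charpoly_two (a b : ℝ) : (!![a, b; b, a] : Matrix (Fin 2) (Fin 2) ℝ).charpoly =
    (Polynomial.X - Polynomial.C (a + b)) * (Polynomial.X - Polynomial.C (a - b)) := by
  simp [Matrix.charpoly, Matrix.det_fin_two, Matrix.charmatrix_apply]
  ring

lemma charpoly_three (a b c d : ℝ) :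
    (!![a, b, d; b, c, b; d, b, a] : Matrix (Fin 3) (Fin 3) ℝ).charpoly =
    (Polynomial.X ^ 2 - Polynomial.C (a + d + c) * Polynomial.X
      + Polynomial.C ((a + d) * c - 2 * b ^ 2)) * (Polynomial.X - Polynomial.C (a - d)) := by
  have h2 : (Polynomial.C 2 : Polynomial ℝ) = 2 := rfl
  simp [Matrix.charpoly, Matrix.det_fin_three, Matrix.charmatrix_apply, h2]
  ring

lemma quad_factor (μ : ℝ) :
    (Polynomial.X - Polynomial.C (lam1 μ)) * (Polynomial.X - Polynomial.C (lam2 μ)) =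
    (Polynomial.X ^ 2 - Polynomial.C (μ ^ 2 / 6 + μ ^ 2 + (1 + μ ^ 2) ^ 2 / 6) * Polynomial.X
      + Polynomial.C ((μ ^ 2 / 6 + μ ^ 2) * ((1 + μ ^ 2) ^ 2 / 6)
        - 2 * (μ * (1 + μ ^ 2) / 4) ^ 2)) := by
  have hD : Real.sqrt (1 + 8 * μ ^ 2 + 63 * μ ^ 4 + 8 * μ ^ 6 + μ ^ 8) ^ 2 =
      1 + 8 * μ ^ 2 + 63 * μ ^ 4 + 8 * μ ^ 6 + μ ^ 8 := Real.sq_sqrt (by positivity)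
  have e1 : μ ^ 2 / 6 + μ ^ 2 + (1 + μ ^ 2) ^ 2 / 6 = lam1 μ + lam2 μ := by
    unfold lam1 lam2; ring
  have e2 : (μ ^ 2 / 6 + μ ^ 2) * ((1 + μ ^ 2) ^ 2 / 6) - 2 * (μ * (1 + μ ^ 2) / 4) ^ 2
      = lam1 μ * lam2 μ := by
    unfold lam1 lam2; linear_combination (1 / 144) * hD
  rw [e1, e2, Polynomial.C_add, Polynomial.C_mul]
  ring

open Polynomial in
/-- The characteristic polynomial of the S=2 transfer matrix `T(μ)` is
`(X−λ₁)(X−λ₂)(X−λ₃)(X−λ₄)²(X−λ₅)²(X−λ₆)²`, so its eigenvalues are `λ₁, λ₂, λ₃`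
(each simple) and `λ₄, λ₅, λ₆` (each of algebraic multiplicity two),
for every `μ ∈ [0,1]`. -/
theorem charpoly_transfer_S2 (μ : ℝ) (hμ : μ ∈ Set.Icc (0 : ℝ) 1) :
    (T μ).charpoly =
      (X - C (lam1 μ)) * (X - C (lam2 μ)) * (X - C (lam3 μ)) *
        (X - C (lam4 μ)) ^ 2 * (X - C (lam5 μ)) ^ 2 * (X - C (lam6 μ)) ^ 2 := by
  rw [← Matrix.charpoly_reindex idxEquiv.symm, T_reindex μ hμ.1,
    Matrix.charpoly_fromBlocks_zero₁₂, Matrix.charpoly_fromBlocks_zero₁₂,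
    Matrix.charpoly_fromBlocks_zero₁₂, charpoly_three, charpoly_two, charpoly_two, quad_factor]
  have e3 : μ ^ 2 / 6 - μ ^ 2 = lam3 μ := by unfold lam3; ring
  have e4 : -(μ * (1 + μ ^ 2)) / 6 - -(μ * (1 + μ ^ 2)) / 4 = lam4 μ := by unfold lam4; ring
  have e5 : -(μ * (1 + μ ^ 2)) / 6 + -(μ * (1 + μ ^ 2)) / 4 = lam5 μ := by unfold lam5; ring
  rw [e3, e4, e5, add_zero, sub_zero, show μ ^ 2 / 6 = lam6 μ from rfl]
  ring
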